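/- Suppose n is even, and let M2 be a matching of maximum weight among all matchings of size n/2 in G. Then there exists a perfect 3-path packing P of G with w(P) ≥ (2/3)·w(M2) + (1/2)·OPT − (1/2)·Σ_{xyz ∈ P*} max{w(xy), w(yz)}; consequently w(P) ≥ (7/12)·OPT. -/

import Mathlib

open Finset
open scoped Classical

namespace MW3PP

/-- A 3-path `xyz`: a path on three distinct vertices with middle vertex `y`. -/
structure P3 (V : Type*) where
  x : V
  y : V
  z : V
  hxy : x ≠ y
  hyz : y ≠ z
  hxz : x ≠ z

variable {V : Type*} [Fintype V] [DecidableEq V]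

/-- The vertex set of a 3-path. -/
def P3.verts (p : P3 V) : Finset V := {p.x, p.y, p.z}

/-- The two edges of a 3-path. -/
def P3.edges (p : P3 V) : Finset (Sym2 V) := {s(p.x, p.y), s(p.y, p.z)}

/-- The weight of a 3-path. -/
def P3.wt (w : Sym2 V → ℝ) (p : P3 V) : ℝ := w s(p.x, p.y) + w s(p.y, p.z)

/-- The total weight of a set of edges. -/
def ew (w : Sym2 V → ℝ) (F : Finset (Sym2 V)) : ℝ := ∑ e ∈ F, w e

/-- The total weight of a set of 3-paths. -/
def pw (w : Sym2 V → ℝ) (P : Finset (P3 V)) : ℝ := ∑ p ∈ P, p.wt w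

/-- `∑_{xyz ∈ S} max (w (xy)) (w (yz))`. -/
def maxSum (w : Sym2 V → ℝ) (S : Finset (P3 V)) : ℝ :=
  ∑ p ∈ S, max (w s(p.x, p.y)) (w s(p.y, p.z))

/-- A perfect 3-path packing: `n/3` pairwise vertex-disjoint 3-paths covering all vertices. -/
def IsPacking (P : Finset (P3 V)) : Prop :=
  P.card = Fintype.card V / 3 ∧
  (∀ p ∈ P, ∀ q ∈ P, p ≠ q → Disjoint p.verts q.verts) ∧
  (∀ v : V, ∃ p ∈ P, v ∈ p.verts)

/-- A maximum-weight perfect 3-path packing. -/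
def IsMaxPacking (w : Sym2 V → ℝ) (P : Finset (P3 V)) : Prop :=
  IsPacking P ∧ ∀ Q : Finset (P3 V), IsPacking Q → pw w Q ≤ pw w P

/-- A matching: a set of pairwise vertex-disjoint (non-loop) edges. -/
def IsMatching (M : Finset (Sym2 V)) : Prop :=
  (∀ e ∈ M, ¬ e.IsDiag) ∧
  ∀ e ∈ M, ∀ f ∈ M, e ≠ f → ∀ v : V, v ∈ e → v ∉ f

/-- A maximum-weight matching among all matchings of size `k`. -/
def IsMaxMatchingOfSize (w : Sym2 V → ℝ) (k : ℕ) (M : Finset (Sym2 V)) : Prop :=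
  IsMatching M ∧ M.card = k ∧
  ∀ M' : Finset (Sym2 V), IsMatching M' → M'.card = k → ew w M' ≤ ew w M

/-- `v ∈ V(M)` : vertex `v` is covered by the matching `M`. -/
def covered (M : Finset (Sym2 V)) (v : V) : Prop := ∃ e ∈ M, v ∈ e

/-- `e_u` : the edge of `M` containing `u` (junk value if there is none). -/
noncomputable def eMatch (M : Finset (Sym2 V)) (u : V) : Sym2 V :=
  if h : ∃ e ∈ M, u ∈ e then h.choose else s(u, u)

/-- The cost `c` of an edge with respect to a matching `M`:
`c(uv) = w(uv) - min (w (e_u)) (w (e_v))` if both endpoints are covered by `M`,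
and `c(uv) = w(uv)` otherwise. -/
noncomputable def cost (w : Sym2 V → ℝ) (M : Finset (Sym2 V)) : Sym2 V → ℝ :=
  Sym2.lift ⟨fun u v =>
    if covered M u ∧ covered M v then
      w s(u, v) - min (w (eMatch M u)) (w (eMatch M v))
    else w s(u, v), by
      intro u v
      dsimp only
      by_cases h : covered M u ∧ covered M v
      · rw [if_pos h, if_pos (show covered M v ∧ covered M u from ⟨h.2, h.1⟩),
          Sym2.eq_swap, min_comm]
      · rw [if_neg h, if_neg (show ¬(covered M v ∧ covered M u) from fun h' => h ⟨h'.2, h'.1⟩),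
          Sym2.eq_swap]⟩

/-- The total cost of a set of edges. -/
noncomputable def cw (w : Sym2 V → ℝ) (M F : Finset (Sym2 V)) : ℝ := ∑ e ∈ F, cost w M e

/-- The number of vertices of the 3-path `p` covered by `M`. -/
noncomputable def kcnt (M : Finset (Sym2 V)) (p : P3 V) : ℕ :=
  (p.verts.filter fun v => covered M v).card

/-- Exactly one of the two edges of `p` lies in `M`. -/
def exOne (M : Finset (Sym2 V)) (p : P3 V) : Prop :=
  (s(p.x, p.y) ∈ M ∧ s(p.y, p.z) ∉ M) ∨ (s(p.x, p.y) ∉ M ∧ s(p.y, p.z) ∈ M)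

def cls1 (M : Finset (Sym2 V)) (p : P3 V) : Prop := kcnt M p = 0
def cls2 (M : Finset (Sym2 V)) (p : P3 V) : Prop := kcnt M p = 1 ∧ ¬ covered M p.y
def cls3 (M : Finset (Sym2 V)) (p : P3 V) : Prop := kcnt M p = 1 ∧ covered M p.y
def cls4 (M : Finset (Sym2 V)) (p : P3 V) : Prop := kcnt M p = 2 ∧ ¬ covered M p.y
def cls5 (M : Finset (Sym2 V)) (p : P3 V) : Prop := kcnt M p = 2 ∧ covered M p.y ∧ exOne M p
def cls6 (M : Finset (Sym2 V)) (p : P3 V) : Prop :=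
  kcnt M p = 2 ∧ covered M p.y ∧ s(p.x, p.y) ∉ M ∧ s(p.y, p.z) ∉ M
def cls7 (M : Finset (Sym2 V)) (p : P3 V) : Prop := kcnt M p = 3 ∧ exOne M p
def cls8 (M : Finset (Sym2 V)) (p : P3 V) : Prop :=
  kcnt M p = 3 ∧ s(p.x, p.y) ∉ M ∧ s(p.y, p.z) ∉ M

/-- The subset of a set of 3-paths satisfying a predicate. -/
noncomputable def psel (P : Finset (P3 V)) (c : P3 V → Prop) : Finset (P3 V) := P.filter c

/-- The set of all edges of the 3-paths in `S`. -/
def Esub (S : Finset (P3 V)) : Finset (Sym2 V) := S.biUnion P3.edges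

/-- The heaviest edge of a 3-path (the edge `xy` in case of a tie). -/
noncomputable def heavy (w : Sym2 V → ℝ) (p : P3 V) : Sym2 V :=
  if w s(p.y, p.z) ≤ w s(p.x, p.y) then s(p.x, p.y) else s(p.y, p.z)

noncomputable def X1 (w : Sym2 V → ℝ) (P : Finset (P3 V)) (M : Finset (Sym2 V)) :
    Finset (Sym2 V) := (psel P (cls1 M)).image (heavy w)
noncomputable def X2 (P : Finset (P3 V)) (M : Finset (Sym2 V)) : Finset (Sym2 V) :=
  (psel P (cls2 M)).image fun p => if covered M p.x then s(p.x, p.y) else s(p.y, p.z)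
noncomputable def X3 (w : Sym2 V → ℝ) (P : Finset (P3 V)) (M : Finset (Sym2 V)) :
    Finset (Sym2 V) := (psel P (cls3 M)).image (heavy w)
noncomputable def X4 (w : Sym2 V → ℝ) (P : Finset (P3 V)) (M : Finset (Sym2 V)) :
    Finset (Sym2 V) := (psel P (cls4 M)).image (heavy w)
noncomputable def X5 (P : Finset (P3 V)) (M : Finset (Sym2 V)) : Finset (Sym2 V) :=
  (psel P (cls5 M)).image fun p => if s(p.x, p.y) ∈ M then s(p.y, p.z) else s(p.x, p.y)
noncomputable def X6 (P : Finset (P3 V)) (M : Finset (Sym2 V)) : Finset (Sym2 V) :=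
  (psel P (cls6 M)).image fun p => if covered M p.x then s(p.y, p.z) else s(p.x, p.y)
noncomputable def X7 (P : Finset (P3 V)) (M : Finset (Sym2 V)) : Finset (Sym2 V) :=
  (psel P (cls7 M)).image fun p => if s(p.x, p.y) ∈ M then s(p.y, p.z) else s(p.x, p.y)
noncomputable def X8 (w : Sym2 V → ℝ) (P : Finset (P3 V)) (M : Finset (Sym2 V)) :
    Finset (Sym2 V) := (psel P (cls8 M)).image (heavy w)

noncomputable def Y1 (w : Sym2 V → ℝ) (P : Finset (P3 V)) (M : Finset (Sym2 V)) :
    Finset (Sym2 V) := Esub (psel P (cls1 M)) \ X1 w P M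
noncomputable def Y2 (P : Finset (P3 V)) (M : Finset (Sym2 V)) : Finset (Sym2 V) :=
  Esub (psel P (cls2 M)) \ X2 P M
noncomputable def Y3 (w : Sym2 V → ℝ) (P : Finset (P3 V)) (M : Finset (Sym2 V)) :
    Finset (Sym2 V) := Esub (psel P (cls3 M)) \ X3 w P M
noncomputable def Y4 (w : Sym2 V → ℝ) (P : Finset (P3 V)) (M : Finset (Sym2 V)) :
    Finset (Sym2 V) := Esub (psel P (cls4 M)) \ X4 w P M
noncomputable def Y5 (P : Finset (P3 V)) (M : Finset (Sym2 V)) : Finset (Sym2 V) :=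
  Esub (psel P (cls5 M)) \ X5 P M
noncomputable def Y6 (P : Finset (P3 V)) (M : Finset (Sym2 V)) : Finset (Sym2 V) :=
  Esub (psel P (cls6 M)) \ X6 P M
noncomputable def Y7 (P : Finset (P3 V)) (M : Finset (Sym2 V)) : Finset (Sym2 V) :=
  Esub (psel P (cls7 M)) \ X7 P M
noncomputable def Y8 (w : Sym2 V → ℝ) (P : Finset (P3 V)) (M : Finset (Sym2 V)) :
    Finset (Sym2 V) := Esub (psel P (cls8 M)) \ X8 w P M

/-- An edge is a middle edge (w.r.t. `M`) if exactly one of its endpoints lies in `V(M)`. -/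
def isMiddle (M : Finset (Sym2 V)) (e : Sym2 V) : Prop :=
  ∃ u v : V, e = s(u, v) ∧ covered M u ∧ ¬ covered M v

/-- Two edges share a vertex. -/
def shares (e f : Sym2 V) : Prop := ∃ v, v ∈ e ∧ v ∈ f

/-- `g` is a middle edge of some 3-path in `S`. -/
def middleIn (M : Finset (Sym2 V)) (S : Finset (P3 V)) (g : Sym2 V) : Prop :=
  (∃ p ∈ S, g ∈ p.edges) ∧ isMiddle M g

/-- The 3-paths of `P` lying in classes 2, 3 or 4. -/
noncomputable def P234 (P : Finset (P3 V)) (M : Finset (Sym2 V)) : Finset (P3 V) :=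
  psel P fun p => cls2 M p ∨ cls3 M p ∨ cls4 M p

/-- `M_1`: edges of `M` sharing a vertex with at least one middle edge of a 3-path of `P*_6`. -/
noncomputable def Mset1 (P : Finset (P3 V)) (M : Finset (Sym2 V)) : Finset (Sym2 V) :=
  M.filter fun f => ∃ g, middleIn M (psel P (cls6 M)) g ∧ shares f g

/-- `M_2`: edges of `M` sharing a vertex with at least one middle edge, all middle edges met
belonging to 3-paths of `P*_2 ∪ P*_3 ∪ P*_4`. -/
noncomputable def Mset2 (P : Finset (P3 V)) (M : Finset (Sym2 V)) : Finset (Sym2 V) :=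
  M.filter fun f =>
    (∃ g, middleIn M P g ∧ shares f g) ∧
    ∀ g, middleIn M P g → shares f g → middleIn M (P234 P M) g

/-- `M_3 = M ∩ E(P*_7)`. -/
noncomputable def Mset3 (P : Finset (P3 V)) (M : Finset (Sym2 V)) : Finset (Sym2 V) :=
  M ∩ Esub (psel P (cls7 M))

/-- `M_4 = M ∩ E(P*_5)`. -/
noncomputable def Mset4 (P : Finset (P3 V)) (M : Finset (Sym2 V)) : Finset (Sym2 V) :=
  M ∩ Esub (psel P (cls5 M))

/-- The middle edges of 3-paths of `P*_6`. -/
noncomputable def mid6 (P : Finset (P3 V)) (M : Finset (Sym2 V)) : Finset (Sym2 V) :=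
  (Esub (psel P (cls6 M))).filter (isMiddle M)

/-- `M'_1`: edges of `M_1` meeting exactly one middle edge of a 3-path of `P*_6` and
no middle edge of a 3-path of `P*_2 ∪ P*_3 ∪ P*_4`. -/
noncomputable def Mset1' (P : Finset (P3 V)) (M : Finset (Sym2 V)) : Finset (Sym2 V) :=
  (Mset1 P M).filter fun f =>
    ((mid6 P M).filter fun g => shares f g).card = 1 ∧
    ∀ g, middleIn M (P234 P M) g → ¬ shares f g

/-- `M''_1`: edges of `M_1` meeting two middle edges of 3-paths of `P*_6`. -/
noncomputable def Mset1'' (P : Finset (P3 V)) (M : Finset (Sym2 V)) : Finset (Sym2 V) :=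
  (Mset1 P M).filter fun f => ((mid6 P M).filter fun g => shares f g).card = 2

/-- `M'''_1`: edges of `M_1` meeting exactly one middle edge of a 3-path of `P*_6` and
at least one middle edge of a 3-path of `P*_2 ∪ P*_3 ∪ P*_4`. -/
noncomputable def Mset1''' (P : Finset (P3 V)) (M : Finset (Sym2 V)) : Finset (Sym2 V) :=
  (Mset1 P M).filter fun f =>
    ((mid6 P M).filter fun g => shares f g).card = 1 ∧
    ∃ g, middleIn M (P234 P M) g ∧ shares f g

/-- Assumption on `P*`: for every 3-path `xyz ∈ P*` with `y ∉ V(M)` and `x, z ∈ V(M)`,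
the vertices `x` and `z` lie in two distinct edges of `M`. -/
def Ass (P : Finset (P3 V)) (M : Finset (Sym2 V)) : Prop :=
  ∀ p ∈ P, ¬ covered M p.y → covered M p.x → covered M p.z →
    ∃ e ∈ M, ∃ f ∈ M, p.x ∈ e ∧ p.z ∈ f ∧ e ≠ f

/-- An admissible edge w.r.t. `M`: either both endpoints are in `V(M)` and lie in two distinct
edges of `M`, or exactly one endpoint is in `V(M)`. -/
def goodEdge (M : Finset (Sym2 V)) (e : Sym2 V) : Prop :=
  (∃ u v : V, e = s(u, v) ∧ covered M u ∧ covered M v ∧ ∀ f ∈ M, ¬(u ∈ f ∧ v ∈ f)) ∨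
  (∃ u v : V, e = s(u, v) ∧ covered M u ∧ ¬ covered M v)

/-!
Let `Q` be a packing. View the matching `N` as a family of vertex-disjoint paths, with isolated
vertices as one-vertex paths. The three vertices of a 3-path of `Q` are ends of paths, and a path
has only two ends, so one of the two edges of the 3-path joins two different paths. Adding such an
edge for every 3-path of `Q`, one after the other, gives paths of total weight at least `w(N)` plus
the weight of the lighter edges of `Q`, which is `w(Q) - ∑ max`. Concatenate them to a Hamiltonian
path and close it to a cycle. The three ways to cut the cycle into triples use every edge twice, so
one of them is a packing with at least two thirds of this weight. Finally `w(N) ≥ ∑ max`, because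
the heavier edges of `Q` form a matching, which extends to one of the size of `N`.
-/

section Walks

variable {α : Type*} {w : Sym2 α → ℝ} {u v : α} {A B : List α} {L L' : List (List α)}

/-- The weight of the walk that visits the entries of a list in order. -/
def walkWt (w : Sym2 α → ℝ) : List α → ℝ
  | [] => 0
  | [_] => 0
  | a :: b :: l => w s(a, b) + walkWt w (b :: l)

/-- The weight of the 3-paths obtained by cutting a list into consecutive triples. One or two
entries left over at the end contribute nothing. -/
def tripleWt (w : Sym2 α → ℝ) : List α → ℝ
  | a :: b :: c :: l => w s(a, b) + w s(b, c) + tripleWt w l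
  | _ => 0

/-- `v` is an end of the path `A`; the only vertex of a one-vertex path is an end of it. -/
def IsEnd (v : α) (A : List α) : Prop := A.head? = some v ∨ A.getLast? = some v

/-- A spanning linear forest: vertex-disjoint paths that together cover all vertices, each encoded
by the list of its vertices in order. -/
structure IsPathCover (L : List (List α)) : Prop where
  nodup : L.flatten.Nodup
  mem_flatten : ∀ v, v ∈ L.flatten

/-- The total weight of a family of paths. -/
def coverWt (w : Sym2 α → ℝ) (L : List (List α)) : ℝ := (L.map (walkWt w)).sum

/-- `v` is an end of some path of the family `L`. -/
def IsTerminal (v : α) (L : List (List α)) : Prop := ∃ A ∈ L, IsEnd v A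

lemma walkWt_append_cons_cons (w : Sym2 α → ℝ) (u v : α) (A B : List α) :
    walkWt w (A ++ u :: v :: B) = walkWt w (A ++ [u]) + w s(u, v) + walkWt w (v :: B) := by
  induction A with
  | nil => simp [walkWt]
  | cons a A ih =>
    cases A with
    | nil => simp only [walkWt, List.nil_append, List.cons_append]; ring
    | cons b A => simp only [List.cons_append, walkWt] at ih ⊢; rw [ih]; ring

lemma walkWt_reverse (w : Sym2 α → ℝ) (A : List α) : walkWt w A.reverse = walkWt w A := by
  induction A with
  | nil => rfl
  | cons a A ih =>
    cases A with
    | nil => rfl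
    | cons b A =>
      have hrev : (a :: b :: A).reverse = A.reverse ++ [b, a] := by simp
      rw [hrev, walkWt_append_cons_cons, ← List.reverse_cons, ih, Sym2.eq_swap]
      simp only [walkWt]; ring

lemma walkWt_add_le_append (hw : ∀ e, 0 ≤ w e) (A B : List α) :
    walkWt w A + walkWt w B ≤ walkWt w (A ++ B) := by
  rcases A.eq_nil_or_concat with rfl | ⟨A, u, rfl⟩
  · simp [walkWt]
  · cases B with
    | nil => simp [walkWt]
    | cons v B =>
      have hsplit := walkWt_append_cons_cons w u v A B
      simp only [List.concat_eq_append, List.append_assoc, List.cons_append, List.nil_append]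
      linarith [hw s(u, v)]

lemma coverWt_le_walkWt_flatten (hw : ∀ e, 0 ≤ w e) (L : List (List α)) :
    coverWt w L ≤ walkWt w L.flatten := by
  induction L with
  | nil => exact le_rfl
  | cons A L ih =>
    calc coverWt w (A :: L) = walkWt w A + coverWt w L := List.sum_cons
      _ ≤ walkWt w A + walkWt w L.flatten := by gcongr
      _ ≤ walkWt w (A :: L).flatten := walkWt_add_le_append hw A L.flatten

lemma tripleWt_add_tripleWt_add_tripleWt (w : Sym2 α → ℝ) (a b c s t : α) :
    ∀ l : List α, 3 ∣ l.length →
      tripleWt w (a :: b :: c :: l) + tripleWt w (b :: c :: (l ++ [s])) +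
          tripleWt w (c :: (l ++ [s, t])) + w s(a, b) + w s(s, t) =
        2 * walkWt w (a :: b :: c :: (l ++ [s, t]))
  | [], _ => by simp only [walkWt, tripleWt, List.nil_append]; ring
  | [_], h => by simp at h
  | [_, _], h => by simp at h
  | d :: e :: f :: l, h => by
    have ih := tripleWt_add_tripleWt_add_tripleWt w d e f s t l (by simpa using h)
    simp only [walkWt, tripleWt, List.cons_append] at ih ⊢
    linarith

/-- The three rotations of a Hamiltonian cycle, cut into triples, use every edge twice. -/
lemma two_mul_walkWt_le_tripleWt (hw : ∀ e, 0 ≤ w e) (a b c : α) {l : List α}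
    (hl : 3 ∣ l.length) :
    2 * walkWt w (a :: b :: c :: l) ≤
      tripleWt w (a :: b :: c :: l) + tripleWt w (b :: c :: (l ++ [a])) +
        tripleWt w (c :: (l ++ [a, b])) := by
  have hcycle := tripleWt_add_tripleWt_add_tripleWt w a b c a b l hl
  have hclose := walkWt_add_le_append hw (a :: b :: c :: l) [a, b]
  simp only [List.cons_append, walkWt] at hclose hcycle ⊢
  linarith

lemma isEnd_reverse : IsEnd v A.reverse ↔ IsEnd v A := by
  simp [IsEnd, or_comm]

lemma IsEnd.eq_or_eq_or_eq {a b c : α} (ha : IsEnd a A) (hb : IsEnd b A) (hc : IsEnd c A) :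
    a = b ∨ b = c ∨ a = c := by
  unfold IsEnd at *
  grind

lemma IsEnd.exists_eq_concat (h : IsEnd v A) :
    ∃ B : List α, A = B ++ [v] ∨ A.reverse = B ++ [v] := by
  rcases h with h | h
  · obtain ⟨B, rfl⟩ := List.head?_eq_some_iff.1 h
    exact ⟨B.reverse, Or.inr List.reverse_cons⟩
  · obtain ⟨B, rfl⟩ := List.getLast?_eq_some_iff.1 h
    exact ⟨B, Or.inl rfl⟩

lemma IsEnd.exists_perm_concat (w : Sym2 α → ℝ) (h : IsEnd v A) :
    ∃ B : List α, (B ++ [v]).Perm A ∧ walkWt w (B ++ [v]) = walkWt w A ∧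
      ∀ t, IsEnd t A → IsEnd t (B ++ [v]) := by
  obtain ⟨B, hB | hB⟩ := h.exists_eq_concat
  · exact ⟨B, hB ▸ ⟨.refl _, rfl, fun _ => id⟩⟩
  · exact ⟨B, hB ▸ ⟨A.reverse_perm, walkWt_reverse w A, fun _ => isEnd_reverse.2⟩⟩

lemma IsEnd.exists_join (w : Sym2 α → ℝ) (hu : IsEnd u A) (hv : IsEnd v B) :
    ∃ C : List α, C.Perm (A ++ B) ∧ walkWt w C = walkWt w A + walkWt w B + w s(u, v) ∧
      ∀ t, t ≠ u → t ≠ v → IsEnd t A ∨ IsEnd t B → IsEnd t C := by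
  obtain ⟨A', hpermA, hwA, hendA⟩ := hu.exists_perm_concat w
  obtain ⟨B', hpermB, hwB, hendB⟩ := hv.exists_perm_concat w
  have hrev : (B' ++ [v]).reverse = v :: B'.reverse := by simp
  refine ⟨(A' ++ [u]) ++ (B' ++ [v]).reverse,
    hpermA.append ((List.reverse_perm _).trans hpermB), ?_, ?_⟩
  · rw [hrev, List.append_assoc, List.singleton_append, walkWt_append_cons_cons, ← hrev,
      walkWt_reverse, hwA, hwB]
    ring
  · rintro t htu htv (ht | ht)
    · have hhead : (A' ++ [u]).head? = some t :=
        (hendA t ht).resolve_right (by simpa using htu.symm)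
      exact Or.inl (by rw [List.head?_append, hhead]; rfl)
    · have hhead : (B' ++ [v]).head? = some t :=
        (hendB t ht).resolve_right (by simpa using htv.symm)
      exact Or.inr (by rw [List.getLast?_append, List.getLast?_reverse, hhead]; rfl)

lemma exists_perm_cons_cons {β : Type*} {l : List β} {a b : β} (ha : a ∈ l) (hb : b ∈ l)
    (hab : a ≠ b) : ∃ l', l.Perm (a :: b :: l') :=
  have hb' : b ∈ l.erase a := (List.mem_erase_of_ne hab.symm).2 hb
  ⟨_, (List.perm_cons_erase ha).trans ((List.perm_cons_erase hb').cons a)⟩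

lemma IsPathCover.of_flatten_perm (hL : IsPathCover L) (h : L'.flatten.Perm L.flatten) :
    IsPathCover L' :=
  ⟨h.nodup_iff.2 hL.nodup, fun v => h.mem_iff.2 (hL.mem_flatten v)⟩

lemma IsPathCover.length_flatten [Fintype α] (hL : IsPathCover L) :
    L.flatten.length = Fintype.card α := by
  rw [← List.toFinset_card_of_nodup hL.nodup, card_eq_iff_eq_univ, eq_univ_iff_forall]
  simpa only [List.mem_toFinset] using hL.mem_flatten

lemma coverWt_perm (w : Sym2 α → ℝ) (h : L.Perm L') : coverWt w L = coverWt w L' :=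
  (h.map (walkWt w)).sum_eq

lemma IsPathCover.exists_join (w : Sym2 α → ℝ) (hL : IsPathCover L) (hA : A ∈ L) (hB : B ∈ L)
    (hAB : A ≠ B) (hu : IsEnd u A) (hv : IsEnd v B) :
    ∃ L', IsPathCover L' ∧ coverWt w L' = coverWt w L + w s(u, v) ∧
      ∀ t, t ≠ u → t ≠ v → IsTerminal t L → IsTerminal t L' := by
  obtain ⟨L₁, hperm⟩ := exists_perm_cons_cons hA hB hAB
  obtain ⟨C, hC, hwC, hendC⟩ := hu.exists_join w hv
  refine ⟨C :: L₁, hL.of_flatten_perm (.trans ?_ hperm.flatten.symm), ?_, ?_⟩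
  · simpa using hC.append_right L₁.flatten
  · rw [coverWt_perm w hperm]
    simp only [coverWt, List.map_cons, List.sum_cons, hwC]
    ring
  · rintro t htu htv ⟨D, hD, ht⟩
    rcases List.mem_cons.1 (hperm.mem_iff.1 hD) with rfl | hD
    · exact ⟨C, List.mem_cons_self, hendC t htu htv (Or.inl ht)⟩
    rcases List.mem_cons.1 hD with rfl | hD
    · exact ⟨C, List.mem_cons_self, hendC t htu htv (Or.inr ht)⟩
    · exact ⟨D, List.mem_cons_of_mem _ hD, ht⟩

end Walks

section Matchings

variable {α : Type*} {M M' : Finset (Sym2 α)} {u v : α}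

lemma IsMatching.subset (hM : IsMatching M) (h : M' ⊆ M) : IsMatching M' :=
  ⟨fun e he => hM.1 e (h he), fun e he f hf => hM.2 e (h he) f (h hf)⟩

lemma IsMatching.insert_of_not_covered [DecidableEq α] (hM : IsMatching M) (huv : u ≠ v)
    (hu : ¬ covered M u) (hv : ¬ covered M v) : IsMatching (insert s(u, v) M) := by
  have hdisj : ∀ f ∈ M, ∀ t ∈ s(u, v), t ∉ f := by
    intro f hf t ht htf
    rcases Sym2.mem_iff.1 ht with rfl | rfl
    exacts [hu ⟨f, hf, htf⟩, hv ⟨f, hf, htf⟩]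
  refine ⟨?_, ?_⟩
  · simpa [huv] using hM.1
  · intro e he f hf hef t hte htf
    rcases mem_insert.1 he with rfl | he <;> rcases mem_insert.1 hf with rfl | hf
    · exact hef rfl
    · exact hdisj f hf t hte htf
    · exact hdisj e he t htf hte
    · exact hM.2 e he f hf hef t hte htf

lemma IsMatching.card_biUnion_toFinset [DecidableEq α] (hM : IsMatching M) :
    (M.biUnion Sym2.toFinset).card = 2 * M.card := by
  have hdisj : (M : Set (Sym2 α)).PairwiseDisjoint Sym2.toFinset := fun e he f hf hef =>
    disjoint_left.2 fun v hve hvf =>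
      hM.2 e he f hf hef v (Sym2.mem_toFinset.1 hve) (Sym2.mem_toFinset.1 hvf)
  rw [card_biUnion hdisj,
    sum_const_nat fun e he => Sym2.card_toFinset_of_not_isDiag e (hM.1 e he), mul_comm]

lemma IsMatching.two_mul_card_le [Fintype α] (hM : IsMatching M) :
    2 * M.card ≤ Fintype.card α :=
  hM.card_biUnion_toFinset ▸ card_le_univ _

lemma IsMatching.exists_insert [Fintype α] [DecidableEq α] (hM : IsMatching M)
    (h : 2 * (M.card + 1) ≤ Fintype.card α) : ∃ e ∉ M, IsMatching (insert e M) := by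
  have hcard : 1 < (M.biUnion Sym2.toFinset)ᶜ.card := by
    rw [card_compl, hM.card_biUnion_toFinset]; omega
  obtain ⟨u, hu, v, hv, huv⟩ := one_lt_card.1 hcard
  have huncov : ∀ t ∈ (M.biUnion Sym2.toFinset)ᶜ, ¬ covered M t := by simp [covered]
  exact ⟨s(u, v), fun he => huncov u hu ⟨_, he, Sym2.mem_mk_left u v⟩,
    hM.insert_of_not_covered huv (huncov u hu) (huncov v hv)⟩

lemma IsMatching.exists_superset_card_eq [Fintype α] (hM : IsMatching M) {k : ℕ}
    (hk : M.card ≤ k) (hkα : 2 * k ≤ Fintype.card α) :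
    ∃ M', M ⊆ M' ∧ IsMatching M' ∧ M'.card = k := by
  induction k, hk using Nat.le_induction with
  | base => exact ⟨M, Subset.rfl, hM, rfl⟩
  | succ k _ ih =>
    obtain ⟨M₁, hsub, hM₁, rfl⟩ := ih (by omega)
    obtain ⟨e, he, hinsert⟩ := hM₁.exists_insert hkα
    exact ⟨insert e M₁, hsub.trans (subset_insert e M₁), hinsert, card_insert_of_notMem he⟩

lemma isPathCover_singletons [Fintype α] :
    IsPathCover ((univ : Finset α).toList.map fun v => [v]) := by
  constructor <;> simp [← List.flatMap_def, nodup_toList]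

lemma IsMatching.exists_isPathCover [Finite α] (w : Sym2 α → ℝ) (hM : IsMatching M) :
    ∃ L, IsPathCover L ∧ (∀ v, IsTerminal v L) ∧ (∀ v, ¬ covered M v → [v] ∈ L) ∧
      coverWt w L = ew w M := by
  cases nonempty_fintype α
  induction M using Finset.induction_on with
  | empty =>
    refine ⟨_, isPathCover_singletons, fun v => ⟨[v], by simp, Or.inl rfl⟩, by simp, ?_⟩
    simp [coverWt, ew, Function.comp_def, walkWt]
  | insert e M he ih =>
    obtain ⟨L, hL, hterm, hsing, hwL⟩ := ih (hM.subset (subset_insert e M))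
    induction e using Sym2.inductionOn with | hf u v =>
    have huncov : ∀ t ∈ s(u, v), [t] ∈ L := fun t ht => hsing t fun ⟨f, hf, htf⟩ =>
      hM.2 _ (mem_insert_self _ M) f (mem_insert_of_mem hf) (fun h => he (h ▸ hf)) t ht htf
    have huv : u ≠ v := hM.1 _ (mem_insert_self _ M)
    obtain ⟨L₁, hperm⟩ := exists_perm_cons_cons (huncov u (Sym2.mem_mk_left u v))
      (huncov v (Sym2.mem_mk_right u v)) (by simpa using huv)
    refine ⟨[u, v] :: L₁, hL.of_flatten_perm (by simpa using hperm.flatten.symm), ?_, ?_, ?_⟩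
    · intro t
      obtain ⟨A, hA, htA⟩ := hterm t
      simp only [hperm.mem_iff, List.mem_cons] at hA
      rcases hA with rfl | rfl | hA
      · exact ⟨[u, v], List.mem_cons_self, Or.inl (by simpa [IsEnd] using htA)⟩
      · exact ⟨[u, v], List.mem_cons_self, Or.inr (by simpa [IsEnd] using htA)⟩
      · exact ⟨A, List.mem_cons_of_mem _ hA, htA⟩
    · intro t ht
      have htL : [t] ∈ L := hsing t fun ⟨f, hf, htf⟩ => ht ⟨f, mem_insert_of_mem hf, htf⟩
      have htuv : t ≠ u ∧ t ≠ v := by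
        rw [← not_or, ← Sym2.mem_iff]
        exact fun h => ht ⟨_, mem_insert_self _ M, h⟩
      simpa [hperm.mem_iff, htuv] using htL
    · rw [ew, sum_insert he, ← ew, ← hwL, coverWt_perm w hperm]
      simp [coverWt, walkWt]

end Matchings

section Packings

variable {α : Type*} {w : Sym2 α → ℝ} {P : Finset (P3 α)}

/-- `∑_{xyz ∈ S} min (w (xy)) (w (yz))`, the total weight of the lighter edges of the 3-paths
in `S`. -/
def minSum (w : Sym2 α → ℝ) (S : Finset (P3 α)) : ℝ :=
  ∑ p ∈ S, min (w s(p.x, p.y)) (w s(p.y, p.z))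

lemma maxSum_add_minSum (w : Sym2 α → ℝ) (S : Finset (P3 α)) :
    maxSum w S + minSum w S = pw w S := by
  rw [maxSum, minSum, ← sum_add_distrib]
  exact sum_congr rfl fun p _ => max_add_min _ _

lemma pw_nonneg (hw : ∀ e, 0 ≤ w e) (S : Finset (P3 α)) : 0 ≤ pw w S :=
  sum_nonneg fun _ _ => add_nonneg (hw _) (hw _)

lemma maxSum_le_pw (hw : ∀ e, 0 ≤ w e) (S : Finset (P3 α)) : maxSum w S ≤ pw w S :=
  sum_le_sum fun _ _ => max_le_add_of_nonneg (hw _) (hw _)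

lemma apply_heavy (w : Sym2 α → ℝ) (p : P3 α) :
    w (heavy w p) = max (w s(p.x, p.y)) (w s(p.y, p.z)) := by
  rw [heavy, apply_ite w, max_def']

lemma not_isDiag_heavy (w : Sym2 α → ℝ) (p : P3 α) : ¬ (heavy w p).IsDiag := by
  rw [heavy]; split_ifs
  exacts [p.hxy, p.hyz]

variable [DecidableEq α]

lemma heavy_mem_edges (w : Sym2 α → ℝ) (p : P3 α) : heavy w p ∈ p.edges := by
  rw [heavy, P3.edges]; split_ifs <;> simp

lemma P3.mem_verts_of_mem_edges {p : P3 α} {e : Sym2 α} {v : α} (he : e ∈ p.edges)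
    (hv : v ∈ e) : v ∈ p.verts := by
  rw [P3.edges, mem_insert, mem_singleton] at he
  rw [P3.verts, mem_insert, mem_insert, mem_singleton]
  rcases he with rfl | rfl <;> rcases Sym2.mem_iff.1 hv with rfl | rfl <;> simp

lemma P3.min_le_of_mem_edges (w : Sym2 α → ℝ) {p : P3 α} {e : Sym2 α} (he : e ∈ p.edges) :
    min (w s(p.x, p.y)) (w s(p.y, p.z)) ≤ w e := by
  rw [P3.edges, mem_insert, mem_singleton] at he
  rcases he with rfl | rfl
  exacts [min_le_left _ _, min_le_right _ _]

lemma P3.card_verts (p : P3 α) : p.verts.card = 3 :=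
  card_eq_three.2 ⟨p.x, p.y, p.z, p.hxy, p.hxz, p.hyz, rfl⟩

lemma card_biUnion_verts (hP : (P : Set (P3 α)).PairwiseDisjoint P3.verts) :
    (P.biUnion P3.verts).card = 3 * P.card := by
  rw [card_biUnion hP, sum_const_nat fun p _ => p.card_verts, mul_comm]

lemma isPacking_iff [Fintype α] :
    IsPacking P ↔ (P : Set (P3 α)).PairwiseDisjoint P3.verts ∧ P.biUnion P3.verts = univ := by
  have hcover : (∀ v, ∃ p ∈ P, v ∈ p.verts) ↔ P.biUnion P3.verts = univ := by
    simp [eq_univ_iff_forall]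
  refine ⟨fun ⟨_, hd, hc⟩ => ⟨hd, hcover.1 hc⟩, fun ⟨hd, hc⟩ => ⟨?_, hd, hcover.2 hc⟩⟩
  have hcard := card_biUnion_verts hd
  rw [hc, card_univ] at hcard
  omega

lemma IsPacking.three_dvd_card [Fintype α] (hP : IsPacking P) : 3 ∣ Fintype.card α := by
  obtain ⟨hdisj, hcover⟩ := isPacking_iff.1 hP
  rw [← card_univ, ← hcover, card_biUnion_verts hdisj]
  exact dvd_mul_right 3 _

lemma eq_of_mem_heavy (hP : (P : Set (P3 α)).PairwiseDisjoint P3.verts) {p q : P3 α}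
    (hp : p ∈ P) (hq : q ∈ P) {v : α} (hvp : v ∈ heavy w p) (hvq : v ∈ heavy w q) : p = q :=
  hP.elim_finset hp hq v (P3.mem_verts_of_mem_edges (heavy_mem_edges w p) hvp)
    (P3.mem_verts_of_mem_edges (heavy_mem_edges w q) hvq)

lemma isMatching_image_heavy (w : Sym2 α → ℝ)
    (hP : (P : Set (P3 α)).PairwiseDisjoint P3.verts) : IsMatching (P.image (heavy w)) := by
  refine ⟨forall_mem_image.2 fun p _ => not_isDiag_heavy w p, ?_⟩
  refine forall_mem_image.2 fun p hp => forall_mem_image.2 fun q hq hpq v hvp hvq => hpq ?_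
  rw [eq_of_mem_heavy hP hp hq hvp hvq]

lemma injOn_heavy (w : Sym2 α → ℝ) (hP : (P : Set (P3 α)).PairwiseDisjoint P3.verts) :
    Set.InjOn (heavy w) (P : Set (P3 α)) := fun _ hp _ hq hpq =>
  eq_of_mem_heavy (w := w) hP hp hq (Sym2.out_fst_mem _) (hpq ▸ Sym2.out_fst_mem _)

lemma IsMaxMatchingOfSize.maxSum_le_ew [Finite α] (hw : ∀ e, 0 ≤ w e) {k : ℕ}
    {N : Finset (Sym2 α)} (hN : IsMaxMatchingOfSize w k N)
    (hP : (P : Set (P3 α)).PairwiseDisjoint P3.verts) (hk : P.card ≤ k) :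
    maxSum w P ≤ ew w N := by
  cases nonempty_fintype α
  have hinj := injOn_heavy w hP
  obtain ⟨M, hsub, hM, hcard⟩ := (isMatching_image_heavy w hP).exists_superset_card_eq
    ((card_image_of_injOn hinj).trans_le hk) (hN.2.1 ▸ hN.1.two_mul_card_le)
  calc maxSum w P = ∑ e ∈ P.image (heavy w), w e := by
        rw [sum_image hinj]; exact sum_congr rfl fun p _ => (apply_heavy w p).symm
    _ ≤ ew w M := sum_le_sum_of_subset_of_nonneg hsub fun e _ _ => hw e
    _ ≤ ew w N := hN.2.2 M hM hcard

lemma P3.exists_mem_edges_between_paths (p : P3 α) {L : List (List α)}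
    (hp : ∀ v ∈ p.verts, IsTerminal v L) :
    ∃ u v, s(u, v) ∈ p.edges ∧ ∃ A ∈ L, ∃ B ∈ L, A ≠ B ∧ IsEnd u A ∧ IsEnd v B := by
  obtain ⟨A, hA, hxA⟩ := hp p.x (by simp [P3.verts])
  obtain ⟨B, hB, hyB⟩ := hp p.y (by simp [P3.verts])
  obtain ⟨C, hC, hzC⟩ := hp p.z (by simp [P3.verts])
  by_cases hAB : A = B
  · refine ⟨p.y, p.z, by simp [P3.edges], B, hB, C, hC, ?_, hyB, hzC⟩
    rintro rfl
    subst hAB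
    rcases hxA.eq_or_eq_or_eq hyB hzC with h | h | h
    exacts [p.hxy h, p.hyz h, p.hxz h]
  · exact ⟨p.x, p.y, by simp [P3.edges], A, hA, B, hB, hAB, hxA, hyB⟩

lemma IsPathCover.exists_join_paths (w : Sym2 α → ℝ) {L : List (List α)} (hL : IsPathCover L)
    (hterm : ∀ v, IsTerminal v L) (hP : (P : Set (P3 α)).PairwiseDisjoint P3.verts) :
    ∃ L', IsPathCover L' ∧ (∀ v ∉ P.biUnion P3.verts, IsTerminal v L') ∧
      coverWt w L + minSum w P ≤ coverWt w L' := by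
  induction P using Finset.induction_on with
  | empty => exact ⟨L, hL, fun v _ => hterm v, by simp [minSum]⟩
  | insert p P hpP ih =>
    rw [coe_insert, Set.pairwiseDisjoint_insert_of_notMem (by simpa using hpP)] at hP
    obtain ⟨L₁, hL₁, hterm₁, hwL₁⟩ := ih hP.1
    have hp : ∀ v ∈ p.verts, IsTerminal v L₁ := fun v hv => hterm₁ v fun hvP => by
      obtain ⟨q, hq, hvq⟩ := mem_biUnion.1 hvP
      exact disjoint_left.1 (hP.2 q hq) hv hvq
    obtain ⟨u, v, he, A, hA, B, hB, hAB, hu, hv⟩ := p.exists_mem_edges_between_paths hp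
    obtain ⟨L', hL', hwL', hterm'⟩ := hL₁.exists_join w hA hB hAB hu hv
    refine ⟨L', hL', fun t ht => ?_, ?_⟩
    · rw [biUnion_insert, notMem_union] at ht
      refine hterm' t ?_ ?_ (hterm₁ t ht.2) <;> rintro rfl
      exacts [ht.1 (P3.mem_verts_of_mem_edges he (Sym2.mem_mk_left _ _)),
        ht.1 (P3.mem_verts_of_mem_edges he (Sym2.mem_mk_right _ _))]
    · rw [minSum, sum_insert hpP, ← minSum]
      linarith [P3.min_le_of_mem_edges w he]

lemma exists_pairwiseDisjoint_verts (w : Sym2 α → ℝ) :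
    ∀ l : List α, 3 ∣ l.length → l.Nodup →
      ∃ P : Finset (P3 α), (P : Set (P3 α)).PairwiseDisjoint P3.verts ∧
        P.biUnion P3.verts = l.toFinset ∧ pw w P = tripleWt w l
  | [], _, _ => ⟨∅, by simp [pw, tripleWt]⟩
  | [_], h, _ => by simp at h
  | [_, _], h, _ => by simp at h
  | a :: b :: c :: l, h, hn => by
    obtain ⟨P, hdisj, hcover, hwP⟩ :=
      exists_pairwiseDisjoint_verts w l (by simpa using h) hn.of_cons.of_cons.of_cons
    simp only [List.nodup_cons, List.mem_cons, not_or] at hn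
    obtain ⟨⟨hab, hac, hal⟩, ⟨hbc, hbl⟩, hcl, -⟩ := hn
    let p : P3 α := ⟨a, b, c, hab, hbc, hac⟩
    have hp : Disjoint p.verts (P.biUnion P3.verts) := by
      simp [hcover, p, P3.verts, hal, hbl, hcl]
    have ha : a ∈ p.verts := mem_insert_self a _
    have hpP : p ∉ P := fun hmem => disjoint_left.1 hp ha (mem_biUnion.2 ⟨p, hmem, ha⟩)
    refine ⟨insert p P, ?_, ?_, ?_⟩
    · rw [coe_insert, Set.pairwiseDisjoint_insert_of_notMem (by simpa using hpP)]
      exact ⟨hdisj, fun q hq => (disjoint_biUnion_right _ _ _).1 hp q hq⟩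
    · simp [biUnion_insert, hcover, p, P3.verts, insert_union]
    · rw [pw, sum_insert hpP, ← pw, hwP]; rfl

lemma exists_isPacking_pw_eq_tripleWt [Fintype α] (w : Sym2 α → ℝ) {l : List α} (hn : l.Nodup)
    (hl : ∀ v, v ∈ l) (h3 : 3 ∣ l.length) : ∃ P, IsPacking P ∧ pw w P = tripleWt w l := by
  obtain ⟨P, hdisj, hcover, hwP⟩ := exists_pairwiseDisjoint_verts w l h3 hn
  refine ⟨P, isPacking_iff.2 ⟨hdisj, hcover.trans ?_⟩, hwP⟩
  simpa [eq_univ_iff_forall] using hl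

lemma exists_isPacking_two_mul_walkWt_le [Fintype α] (hw : ∀ e, 0 ≤ w e) {l : List α}
    (hn : l.Nodup) (hl : ∀ v, v ∈ l) (h3 : 3 ∣ l.length) :
    ∃ P, IsPacking P ∧ 2 * walkWt w l ≤ 3 * pw w P := by
  have hcut : ∀ {l' : List α}, l'.Perm l → ∃ P, IsPacking P ∧ pw w P = tripleWt w l' :=
    fun h => exists_isPacking_pw_eq_tripleWt w (h.nodup_iff.2 hn)
      (fun v => h.mem_iff.2 (hl v)) (h.length_eq ▸ h3)
  match l, h3 with
  | [], _ =>
    obtain ⟨P, hP, hwP⟩ := hcut (.refl _)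
    exact ⟨P, hP, by simp [hwP, walkWt, tripleWt]⟩
  | [_], h3 => simp at h3
  | [_, _], h3 => simp at h3
  | a :: b :: c :: l, h3 =>
    obtain ⟨P₀, hP₀, hw₀⟩ := hcut (.refl _)
    obtain ⟨P₁, hP₁, hw₁⟩ := hcut (List.perm_append_singleton a (b :: c :: l))
    obtain ⟨P₂, hP₂, hw₂⟩ := hcut (List.perm_append_comm (l₁ := c :: l) (l₂ := [a, b]))
    have hsum := two_mul_walkWt_le_tripleWt hw a b c (l := l) (by simpa using h3)
    by_contra! hlt
    simp only [List.cons_append] at hw₁ hw₂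
    linarith [hlt P₀ hP₀, hlt P₁ hP₁, hlt P₂ hP₂]

end Packings

theorem statement_4_general {w : Sym2 V → ℝ} (hw : ∀ e, 0 ≤ w e) {Q : Finset (P3 V)}
    (hQ : IsPacking Q) {k : ℕ} (hk : Fintype.card V / 3 ≤ k) {N : Finset (Sym2 V)}
    (hN : IsMaxMatchingOfSize w k N) :
    ∃ P : Finset (P3 V), IsPacking P ∧
      (2 / 3 : ℝ) * (ew w N + (pw w Q - maxSum w Q)) ≤ pw w P ∧
      (2 / 3 : ℝ) * pw w Q ≤ pw w P := by
  have hdisj := (isPacking_iff.1 hQ).1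
  obtain ⟨L₀, hL₀, hterm, -, hwL₀⟩ := hN.1.exists_isPathCover w
  obtain ⟨L, hL, -, hwL⟩ := hL₀.exists_join_paths w hterm hdisj
  obtain ⟨P, hP, hwP⟩ := exists_isPacking_two_mul_walkWt_le hw hL.nodup hL.mem_flatten
    (hL.length_flatten ▸ hQ.three_dvd_card)
  have hflatten := coverWt_le_walkWt_flatten hw L
  have hsplit := maxSum_add_minSum w Q
  have hmax : maxSum w Q ≤ ew w N := hN.maxSum_le_ew hw hdisj (hQ.1.trans_le hk)
  exact ⟨P, hP, by linarith, by linarith⟩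

theorem statement_4 (n : ℕ) (hn : Fintype.card V = n) (h3 : 3 ∣ n) (h2 : 2 ∣ n)
    (w : Sym2 V → ℝ) (hw : ∀ e : Sym2 V, 0 ≤ w e)
    (Pstar : Finset (P3 V)) (hP : IsMaxPacking w Pstar)
    (N : Finset (Sym2 V)) (hN : IsMaxMatchingOfSize w (n / 2) N) :
    ∃ P : Finset (P3 V), IsPacking P ∧
      (2 / 3 : ℝ) * ew w N + (1 / 2 : ℝ) * pw w Pstar - (1 / 2 : ℝ) * maxSum w Pstar ≤ pw w P ∧
      (7 / 12 : ℝ) * pw w Pstar ≤ pw w P := by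
  obtain ⟨P, hPP, hmatch, hopt⟩ := statement_4_general hw hP.1 (by omega) hN
  exact ⟨P, hPP, by linarith [maxSum_le_pw hw Pstar], by linarith [pw_nonneg hw Pstar]⟩

end MW3PP
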